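/- Let R be a basic left Harada algebra with modules P_{ij} := rad^{j-1}(e_{i1}R) as below, and let f : P_{ij} → P_{kl} be a homomorphism of right R-modules. Then f is not injective if and only if the image of f is contained in rad(P_{k n_k}). In particular, if i = k and j < l, or if i ≠ k, then the image of f is contained in rad(P_{k n_k}). -/

import Mathlib

/-!
Common setup.  `K` is an algebraically closed field and `R` a finite-dimensional associative
unital `K`-algebra.  Right `R`-modules are formalized as modules over the opposite ring `Rᵐᵒᵖ`
(so that `MulOpposite.op r • x = x * r`).
-/

open MulOpposite

/-- The right ideal `xR` of a ring `R`, as a submodule of `R` over `Rᵐᵒᵖ`. -/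
def rightIdeal (R : Type) [Ring R] (x : R) : Submodule Rᵐᵒᵖ R :=
  Submodule.span Rᵐᵒᵖ {x}

/-- The Jacobson radical of a submodule `N` (the intersection of the maximal submodules of the
module `N`), viewed as a submodule of the ambient module.  Iterating this operation gives the
iterated radicals `rad^k`. -/
def radSub {A M : Type} [Ring A] [AddCommGroup M] [Module A M] (N : Submodule A M) :
    Submodule A M :=
  Submodule.map N.subtype (sInf {P : Submodule A ↥N | IsCoatom P})

/-- A module is indecomposable if it is nonzero and admits no nontrivial direct sum
decomposition. -/
def IsIndecomposableMod (A M : Type) [Ring A] [AddCommGroup M] [Module A M] : Prop :=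
  Nontrivial M ∧ ∀ N N' : Submodule A M, IsCompl N N' → N = ⊥ ∨ N' = ⊥

/-- A module has projective dimension at most one iff it admits a surjection from a projective
module with projective kernel. -/
def PdLeOne (A : Type) [Ring A] (M : Type) [AddCommGroup M] [Module A M] : Prop :=
  ∃ (P : ModuleCat.{0} A) (f : ↥P →ₗ[A] M),
    Module.Projective A ↥P ∧ Function.Surjective f ∧
      Module.Projective A ↥(LinearMap.ker f)

/-- `Ext¹_A(M,N) = 0`, expressed by the splitting of every short exact sequence
`0 → N → E → M → 0`. -/
def Ext1Zero (A : Type) [Ring A] (M N : Type) [AddCommGroup M] [Module A M]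
    [AddCommGroup N] [Module A N] : Prop :=
  ∀ (E : ModuleCat.{0} A) (i : N →ₗ[A] ↥E) (p : ↥E →ₗ[A] M),
    Function.Injective i → Function.Surjective p → LinearMap.range i = LinearMap.ker p →
    ∃ s : M →ₗ[A] ↥E, p.comp s = LinearMap.id

/-- `X ∈ add T` : `X` is a direct summand of a finite direct sum of copies of `T`. -/
def InAdd (A : Type) [Ring A] (T X : Type) [AddCommGroup T] [Module A T]
    [AddCommGroup X] [Module A X] : Prop :=
  ∃ (k : ℕ) (f : X →ₗ[A] (Fin k → T)) (g : (Fin k → T) →ₗ[A] X),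
    g.comp f = LinearMap.id

/-- `T` is a (finitely generated) tilting right `R`-module: projective dimension at most one,
no self-extensions, and there is a short exact sequence `0 → R → T₀ → T₁ → 0` with
`T₀, T₁ ∈ add T`. -/
def IsTiltingRight (R : Type) [Ring R] (T : Type) [AddCommGroup T] [Module Rᵐᵒᵖ T] : Prop :=
  Module.Finite Rᵐᵒᵖ T ∧ PdLeOne Rᵐᵒᵖ T ∧ Ext1Zero Rᵐᵒᵖ T T ∧
    ∃ (T₀ T₁ : ModuleCat.{0} Rᵐᵒᵖ) (f : R →ₗ[Rᵐᵒᵖ] ↥T₀) (g : ↥T₀ →ₗ[Rᵐᵒᵖ] ↥T₁),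
      InAdd Rᵐᵒᵖ T ↥T₀ ∧ InAdd Rᵐᵒᵖ T ↥T₁ ∧
        Function.Injective f ∧ Function.Surjective g ∧ LinearMap.range f = LinearMap.ker g

/-- `T` is basic: it is an (internal) direct sum of pairwise non-isomorphic indecomposable
submodules. -/
def IsBasicMod (A : Type) [Ring A] (T : Type) [AddCommGroup T] [Module A T] : Prop :=
  ∃ (k : ℕ) (N : Fin k → Submodule A T),
    DirectSum.IsInternal N ∧ (∀ a, IsIndecomposableMod A ↥(N a)) ∧
      ∀ a b, a ≠ b → IsEmpty (↥(N a) ≃ₗ[A] ↥(N b))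

/-- The setoid identifying isomorphic modules (among those with property `P`). -/
def isoSetoid (A : Type) [Ring A] (P : ModuleCat.{0} A → Prop) :
    Setoid {M : ModuleCat.{0} A // P M} where
  r M N := Nonempty (↥M.1 ≃ₗ[A] ↥N.1)
  iseqv := ⟨fun M => ⟨LinearEquiv.refl A ↥M.1⟩, fun ⟨e⟩ => ⟨e.symm⟩,
    fun ⟨e⟩ ⟨f⟩ => ⟨e.trans f⟩⟩

/-- The data exhibiting a ring `R` as a basic left Harada algebra:
a complete set `{e i j}` of orthogonal primitive idempotents with pairwise non-isomorphic
right ideals `(e i j)R` (`R` is basic), such that each `(e i 0)R` is an injective right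
module, and `(e i j)R ≅ rad ((e i (j-1))R)` for `j ≥ 1`.  (Indices are shifted by one from
the paper: the paper's `e_{ij}` is `e i (j-1)` here.) -/
structure HaradaData (R : Type) [Ring R] : Type where
  m : ℕ
  hm : 0 < m
  n : Fin m → ℕ
  hn : ∀ i, 0 < n i
  e : (i : Fin m) → Fin (n i) → R
  idem : ∀ i j, IsIdempotentElem (e i j)
  orth : ∀ p q : Σ i : Fin m, Fin (n i), p ≠ q → e p.1 p.2 * e q.1 q.2 = 0
  sum_eq_one : ∑ p : Σ i : Fin m, Fin (n i), e p.1 p.2 = 1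
  indec : ∀ i j, IsIndecomposableMod Rᵐᵒᵖ ↥(rightIdeal R (e i j))
  basic : ∀ p q : Σ i : Fin m, Fin (n i), p ≠ q →
    IsEmpty (↥(rightIdeal R (e p.1 p.2)) ≃ₗ[Rᵐᵒᵖ] ↥(rightIdeal R (e q.1 q.2)))
  inj : ∀ i, Module.Injective Rᵐᵒᵖ ↥(rightIdeal R (e i ⟨0, hn i⟩))
  rad_iso : ∀ (i : Fin m) (j : Fin (n i)), 0 < j.val →
    Nonempty (↥(rightIdeal R (e i j)) ≃ₗ[Rᵐᵒᵖ]
      ↥(radSub (rightIdeal R (e i ⟨j.val - 1, Nat.lt_of_le_of_lt (Nat.sub_le j.val 1) j.isLt⟩))))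

variable {R : Type} [Ring R]

/-- `H.P i j = rad^j ((e i 0)R)`; this is the paper's `P_{i,j+1} = rad^j (e_{i1}R)`,
a submodule of `R`. -/
def HaradaData.P (H : HaradaData R) (i : Fin H.m) (j : Fin (H.n i)) : Submodule Rᵐᵒᵖ R :=
  radSub^[j.val] (rightIdeal R (H.e i ⟨0, H.hn i⟩))

/-- The quotient module `P_{ik}/P_{il}` (for `l ≥ k` we have `H.P i l ≤ H.P i k`). -/
abbrev HaradaData.Quot (H : HaradaData R) (i : Fin H.m) (k l : Fin (H.n i)) : Type :=
  ↥(H.P i k) ⧸ Submodule.comap (H.P i k).subtype (H.P i l)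

/-- The last index (the paper's `n_i`) in `Fin (H.n i)`. -/
def HaradaData.last (H : HaradaData R) (i : Fin H.m) : Fin (H.n i) :=
  ⟨H.n i - 1, Nat.sub_lt (H.hn i) one_pos⟩

/-- The right ideal `I = ⊕_{i,j} rad^{n_i - j + 1}(e_{ij}R)` of the paper. -/
def HaradaData.I (H : HaradaData R) : Submodule Rᵐᵒᵖ R :=
  ⨆ p : Σ i : Fin H.m, Fin (H.n i),
    radSub^[H.n p.1 - p.2.val] (rightIdeal R (H.e p.1 p.2))

/-- The submodule `T·I` of a right module `T`, for `I` a right ideal of `R`. -/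
def smulSub (I : Submodule Rᵐᵒᵖ R) (T : Type) [AddCommGroup T] [Module Rᵐᵒᵖ T] :
    Submodule Rᵐᵒᵖ T :=
  Submodule.span Rᵐᵒᵖ {x : T | ∃ (t : T) (r : R), r ∈ I ∧ x = op r • t}

/-!
Indecomposable modules of finite length have local endomorphism rings (Fitting). Hence an
indecomposable injective `P_{i1}` is uniform and an indecomposable projective `P_{ij}` has its
radical as largest proper submodule, so that a submodule of `P_{k1}` which is not one of the
`P_{ks}` lies in `rad(P_{k n_k})`.

If the image of `f` is some `P_{ks}`, it is projective, so `f` splits off its image and is injective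
because `P_{ij}` is indecomposable. Conversely, an injective `f` extends to `P_{i1} → P_{k1}`, which
is injective by uniformity and splits by injectivity of `P_{i1}`; so `P_{i1} ≅ P_{k1}` and `i = k`.
By the descending chain condition, the image of an injective `P_{ij} → P_{i1}` is not properly
contained in `P_{ij}`, whereas `rad(P_{i n_i})` and `P_{il}` for `j < l` are.
-/

section Indecomposable

variable {A M N : Type} [Ring A] [AddCommGroup M] [Module A M] [AddCommGroup N] [Module A N]

namespace IsIndecomposableMod

theorem of_linearEquiv (hM : IsIndecomposableMod A M) (e : M ≃ₗ[A] N) :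
    IsIndecomposableMod A N := by
  have : Nontrivial M := hM.1
  refine ⟨e.symm.toEquiv.nontrivial, fun B C hBC => ?_⟩
  have hcompl := (Submodule.orderIsoMapComap e.symm).isCompl hBC
  exact (hM.2 _ _ hcompl).imp (by simp) (by simp)

theorem injective_of_comp_eq_id [Nontrivial N] (hM : IsIndecomposableMod A M) {r : M →ₗ[A] N}
    {s : N →ₗ[A] M} (hrs : r ∘ₗ s = LinearMap.id) : Function.Injective r := by
  have hr : LinearMap.range r = ⊤ := LinearMap.range_eq_top_of_surjective r
    (LinearMap.surjective_of_comp_eq_id s r hrs)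
  have hs : LinearMap.ker s = ⊥ := LinearMap.ker_eq_bot_of_inverse hrs
  have hidem : IsIdempotentElem (s ∘ₗ r : Module.End A M) := by
    rw [IsIdempotentElem, Module.End.mul_eq_comp, LinearMap.comp_assoc, ← LinearMap.comp_assoc r,
      hrs, LinearMap.id_comp]
  have hcompl : IsCompl (LinearMap.range s) (LinearMap.ker r) := by
    simpa only [LinearMap.range_comp_of_range_eq_top s hr, LinearMap.ker_comp_of_ker_eq_bot r hs]
      using LinearMap.IsIdempotentElem.isCompl hidem
  rcases hM.2 _ _ hcompl with hrange | hker
  · exact absurd (hs.symm.trans (LinearMap.ker_eq_top.mpr (LinearMap.range_eq_bot.mp hrange)))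
      bot_ne_top
  · exact LinearMap.ker_eq_bot.mp hker

theorem injective_of_projective_range (hM : IsIndecomposableMod A M) (f : M →ₗ[A] N)
    [Module.Projective A (LinearMap.range f)] [Nontrivial (LinearMap.range f)] :
    Function.Injective f := by
  obtain ⟨s, hs⟩ :=
    Module.projective_lifting_property f.rangeRestrict LinearMap.id f.surjective_rangeRestrict
  exact f.injective_rangeRestrict_iff.mp (hM.injective_of_comp_eq_id hs)

theorem isUnit_or_isNilpotent_end [IsNoetherian A M] [IsArtinian A M]
    (hM : IsIndecomposableMod A M) (f : Module.End A M) : IsUnit f ∨ IsNilpotent f := by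
  obtain ⟨n, hcompl, hn⟩ :=
    (f.eventually_isCompl_ker_pow_range_pow.and (Filter.eventually_ne_atTop 0)).exists
  rcases hM.2 _ _ hcompl with hker | hrange
  · have hbij := IsArtinian.bijective_of_injective_endomorphism _ (LinearMap.ker_eq_bot.mp hker)
    exact .inl ((isUnit_pow_iff hn).mp ((Module.End.isUnit_iff _).mpr hbij))
  · exact .inr ⟨n, LinearMap.range_eq_bot.mp hrange⟩

theorem isLocalRing_end [IsNoetherian A M] [IsArtinian A M] (hM : IsIndecomposableMod A M) :
    IsLocalRing (Module.End A M) :=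
  have : Nontrivial M := hM.1
  .of_isUnit_or_isUnit_one_sub_self fun f =>
    (hM.isUnit_or_isNilpotent_end f).imp_right IsNilpotent.isUnit_one_sub

end IsIndecomposableMod

end Indecomposable

section LocalEnd

variable {A M : Type*} [Ring A] [AddCommGroup M] [Module A M]
  [IsLocalRing (Module.End A M)]

theorem eq_bot_or_eq_bot_of_disjoint_of_injective [Module.Injective A M] {B C : Submodule A M}
    (hBC : Disjoint B C) : B = ⊥ ∨ C = ⊥ := by
  have hinj : Function.Injective (B.subtype.coprod C.subtype) := by
    rw [← LinearMap.ker_eq_bot, LinearMap.ker_coprod_of_disjoint_range]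
    · simp
    · simpa using hBC
  obtain ⟨φ, hφ⟩ := Module.Injective.out (B.subtype.coprod C.subtype) hinj
    (B.subtype ∘ₗ LinearMap.fst A B C)
  have hφB (b : B) : φ b = b := by simpa using hφ (b, 0)
  have hφC (c : C) : φ c = 0 := by simpa using hφ (0, c)
  rcases IsLocalRing.isUnit_or_isUnit_of_add_one (sub_add_cancel 1 φ) with hunit | hunit
  · refine .inl ((Submodule.eq_bot_iff B).mpr fun b hb => ?_)
    exact ((Module.End.isUnit_iff _).mp hunit).1 (by simp [hφB ⟨b, hb⟩])
  · refine .inr ((Submodule.eq_bot_iff C).mpr fun c hc => ?_)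
    exact ((Module.End.isUnit_iff _).mp hunit).1 (by simp [hφC ⟨c, hc⟩])

theorem eq_top_or_eq_top_of_codisjoint_of_projective [Module.Projective A M]
    {B C : Submodule A M} (hBC : Codisjoint B C) : B = ⊤ ∨ C = ⊤ := by
  have hsurj : Function.Surjective (B.subtype.coprod C.subtype) := by
    rw [← LinearMap.range_eq_top, LinearMap.range_coprod, Submodule.range_subtype,
      Submodule.range_subtype, hBC.eq_top]
  obtain ⟨s, hs⟩ := Module.projective_lifting_property _ LinearMap.id hsurj
  let φ : Module.End A M := B.subtype ∘ₗ LinearMap.fst A B C ∘ₗ s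
  let ψ : Module.End A M := C.subtype ∘ₗ LinearMap.snd A B C ∘ₗ s
  have hφψ : φ + ψ = 1 := by
    ext x
    exact LinearMap.congr_fun hs x
  rcases IsLocalRing.isUnit_or_isUnit_of_add_one hφψ with hunit | hunit
  · refine .inl (eq_top_iff.mpr fun x _ => ?_)
    obtain ⟨y, rfl⟩ := ((Module.End.isUnit_iff φ).mp hunit).2 x
    exact (s y).1.2
  · refine .inr (eq_top_iff.mpr fun x _ => ?_)
    obtain ⟨y, rfl⟩ := ((Module.End.isUnit_iff ψ).mp hunit).2 x
    exact (s y).2.2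

theorem le_jacobson_of_ne_top_of_projective [Module.Projective A M] {B : Submodule A M}
    (hB : B ≠ ⊤) : B ≤ Module.jacobson A M := by
  refine le_sInf fun C hC => ?_
  by_contra hBC
  have hcodisj : Codisjoint B C := (hC.not_le_iff_codisjoint.mp hBC).symm
  exact (eq_top_or_eq_top_of_codisjoint_of_projective hcodisj).elim hB hC.1

theorem injective_of_injective_comp_of_isLocalRing_end {U N : Type*} [AddCommGroup U]
    [Module A U] [Nontrivial U] [AddCommGroup N] [Module A N] [Module.Injective A M]
    {u : U →ₗ[A] M} {g : M →ₗ[A] N} (hgu : Function.Injective (g ∘ₗ u)) : Function.Injective g := by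
  have hker : LinearMap.ker (g ∘ₗ u) = ⊥ := LinearMap.ker_eq_bot.mpr hgu
  have hdisj : Disjoint (LinearMap.range u) (LinearMap.ker g) := by
    rw [disjoint_iff, ← Submodule.map_comap_eq, ← LinearMap.ker_comp, hker, Submodule.map_bot]
  have hrange : LinearMap.range u ≠ ⊥ := by
    intro h
    rw [LinearMap.range_eq_bot.mp h, LinearMap.comp_zero, LinearMap.ker_zero] at hker
    exact top_ne_bot hker
  exact LinearMap.ker_eq_bot.mp
    ((eq_bot_or_eq_bot_of_disjoint_of_injective hdisj).resolve_left hrange)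

end LocalEnd

theorem nonempty_linearEquiv_of_injective_of_injective {A U E E' : Type} [Ring A]
    [AddCommGroup U] [Module A U] [Nontrivial U]
    [AddCommGroup E] [Module A E] [Module.Injective A E] [IsLocalRing (Module.End A E)]
    [AddCommGroup E'] [Module A E'] [Module.Injective A E'] (hE' : IsIndecomposableMod A E')
    {u : U →ₗ[A] E} (hu : Function.Injective u) {v : U →ₗ[A] E'} (hv : Function.Injective v) :
    Nonempty (E ≃ₗ[A] E') := by
  obtain ⟨g, hgu⟩ := Module.Injective.out u hu v
  obtain rfl : g ∘ₗ u = v := LinearMap.ext hgu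
  have hg : Function.Injective g := injective_of_injective_comp_of_isLocalRing_end hv
  obtain ⟨r, hrg⟩ := Module.Injective.out g hg LinearMap.id
  have : Nontrivial E := hu.nontrivial
  have hr : Function.Injective r := hE'.injective_of_comp_eq_id (LinearMap.ext hrg)
  exact ⟨(LinearEquiv.ofBijective r ⟨hr, fun x => ⟨g x, hrg x⟩⟩).symm⟩

theorem range_subtype_comp_le {A M N : Type*} [Semiring A] [AddCommMonoid M] [Module A M]
    [AddCommMonoid N] [Module A N] {L : Submodule A M} (f : N →ₗ[A] L) :
    LinearMap.range (L.subtype ∘ₗ f) ≤ L :=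
  (LinearMap.range_comp_le_range f L.subtype).trans_eq L.range_subtype

theorem not_range_lt_of_injective {A M : Type*} [Ring A] [AddCommGroup M] [Module A M]
    {N : Submodule A M} [IsArtinian A N] {f : N →ₗ[A] M} (hf : Function.Injective f) :
    ¬ LinearMap.range f < N := by
  intro hlt
  let g : N →ₗ[A] N := f.codRestrict N fun x => hlt.le (LinearMap.mem_range_self f x)
  have hg : Function.Surjective g := IsArtinian.surjective_of_injective_endomorphism g
    fun x y hxy => hf (congrArg Subtype.val hxy)
  refine hlt.not_ge fun x hx => ?_
  obtain ⟨y, hy⟩ := hg ⟨x, hx⟩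
  exact ⟨y, congrArg Subtype.val hy⟩

section Radical

variable {A M : Type} [Ring A] [AddCommGroup M] [Module A M] {N L : Submodule A M}

theorem radSub_eq_map_jacobson (N : Submodule A M) :
    radSub N = (Module.jacobson A N).map N.subtype :=
  rfl

theorem radSub_le (N : Submodule A M) : radSub N ≤ N :=
  Submodule.map_subtype_le _ _

theorem antitone_radSub_iterate (N : Submodule A M) : Antitone fun t => radSub^[t] N :=
  fun _ _ hst => Function.antitone_iterate_of_le_id radSub_le hst N

theorem radSub_lt (N : Submodule A M) [Nontrivial N] [IsCoatomic (Submodule A N)] :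
    radSub N < N := by
  rw [radSub_eq_map_jacobson]
  simpa only [Submodule.map_subtype_top] using
    Submodule.map_strictMono_of_injective N.injective_subtype (Module.jacobson_lt_top A N)

theorem le_radSub_of_lt [IsLocalRing (Module.End A N)] [Module.Projective A N] (hL : L < N) :
    L ≤ radSub N := by
  have hproper : L.comap N.subtype ≠ ⊤ := fun h => hL.not_ge (Submodule.comap_subtype_eq_top.mp h)
  calc
    L = (L.comap N.subtype).map N.subtype := by
      rw [Submodule.map_comap_subtype, inf_eq_right.mpr hL.le]
    _ ≤ (Module.jacobson A N).map N.subtype :=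
      Submodule.map_mono (le_jacobson_of_ne_top_of_projective hproper)
    _ = radSub N := (radSub_eq_map_jacobson N).symm

theorem nonempty_radSub_linearEquiv {M' : Type} [AddCommGroup M'] [Module A M']
    {N' : Submodule A M'} (e : N ≃ₗ[A] N') : Nonempty (radSub N ≃ₗ[A] radSub N') := by
  have hmap : (Module.jacobson A N).map e.toLinearMap = Module.jacobson A N' :=
    Module.map_jacobson_of_bijective e.bijective
  exact ⟨(Submodule.equivMapOfInjective N.subtype N.injective_subtype _).symm ≪≫ₗ
    e.submoduleMap _ ≪≫ₗ LinearEquiv.ofEq _ _ hmap ≪≫ₗ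
    Submodule.equivMapOfInjective N'.subtype N'.injective_subtype _⟩

theorem le_radSub_iterate_or_eq (hL : L ≤ N) {t : ℕ}
    (hlocal : ∀ s < t, L < radSub^[s] N → L ≤ radSub (radSub^[s] N)) :
    L ≤ radSub^[t] N ∨ ∃ s < t, L = radSub^[s] N := by
  induction t with
  | zero => exact .inl hL
  | succ t ih =>
    rcases ih fun s hs => hlocal s (hs.trans t.lt_succ_self) with hle | ⟨s, hs, rfl⟩
    · rw [Function.iterate_succ_apply']
      exact hle.lt_or_eq.imp (hlocal t t.lt_succ_self) fun h => ⟨t, t.lt_succ_self, h⟩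
    · exact .inr ⟨s, hs.trans t.lt_succ_self, rfl⟩

end Radical

section RightModule

variable {R : Type*} [Ring R]

theorem projective_mulOpposite_self : Module.Projective Rᵐᵒᵖ R :=
  .of_equiv' (opLinearEquiv Rᵐᵒᵖ).symm

theorem isNoetherian_mulOpposite_self_of_isArtinian [IsArtinian Rᵐᵒᵖ R] :
    IsNoetherian Rᵐᵒᵖ R :=
  have : IsArtinianRing Rᵐᵒᵖ := (opLinearEquiv Rᵐᵒᵖ).isArtinian_iff.mp ‹_›
  IsSemiprimaryRing.isNoetherian_iff_isArtinian.mpr ‹_›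

end RightModule

theorem projective_rightIdeal {e : R} (he : IsIdempotentElem e) :
    Module.Projective Rᵐᵒᵖ (rightIdeal R e) := by
  have : Module.Projective Rᵐᵒᵖ R := projective_mulOpposite_self
  let p : R →ₗ[Rᵐᵒᵖ] rightIdeal R e := (LinearMap.mulLeft Rᵐᵒᵖ e).codRestrict _ fun x =>
    Submodule.mem_span_singleton.mpr ⟨op x, rfl⟩
  refine .of_split (rightIdeal R e).subtype p (LinearMap.ext fun ⟨x, hx⟩ => Subtype.ext ?_)
  obtain ⟨r, rfl⟩ := Submodule.mem_span_singleton.mp hx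
  change e * (e * unop r) = e * unop r
  rw [← mul_assoc, he.eq]

namespace HaradaData

variable (H : HaradaData R) {i k : Fin H.m}

theorem nonempty_rightIdeal_linearEquiv_P (i : Fin H.m) :
    ∀ j : Fin (H.n i), Nonempty (rightIdeal R (H.e i j) ≃ₗ[Rᵐᵒᵖ] H.P i j)
  | ⟨0, _⟩ => ⟨LinearEquiv.refl _ _⟩
  | ⟨t + 1, ht⟩ => by
    obtain ⟨e⟩ := nonempty_rightIdeal_linearEquiv_P i ⟨t, Nat.lt_of_succ_lt ht⟩
    obtain ⟨erad⟩ := H.rad_iso i ⟨t + 1, ht⟩ t.succ_pos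
    obtain ⟨eP⟩ := nonempty_radSub_linearEquiv e
    exact ⟨erad ≪≫ₗ eP ≪≫ₗ LinearEquiv.ofEq _ _ (Function.iterate_succ_apply' radSub t _).symm⟩

theorem isIndecomposableMod_P (j : Fin (H.n i)) : IsIndecomposableMod Rᵐᵒᵖ (H.P i j) :=
  have ⟨e⟩ := H.nonempty_rightIdeal_linearEquiv_P i j
  (H.indec i j).of_linearEquiv e

instance nontrivial_P (j : Fin (H.n i)) : Nontrivial (H.P i j) :=
  (H.isIndecomposableMod_P j).1

instance projective_P (j : Fin (H.n i)) : Module.Projective Rᵐᵒᵖ (H.P i j) :=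
  have ⟨e⟩ := H.nonempty_rightIdeal_linearEquiv_P i j
  have := projective_rightIdeal (H.idem i j)
  .of_equiv' e

instance injective_P_zero (i : Fin H.m) : Module.Injective Rᵐᵒᵖ (H.P i ⟨0, H.hn i⟩) :=
  H.inj i

theorem antitone_P (i : Fin H.m) : Antitone (H.P i) :=
  fun _ _ hst => antitone_radSub_iterate _ hst

theorem P_le_P_zero (j : Fin (H.n i)) : H.P i j ≤ H.P i ⟨0, H.hn i⟩ :=
  H.antitone_P i (Nat.zero_le j.val)

theorem radSub_P_last (i : Fin H.m) :
    radSub (H.P i (H.last i)) = radSub^[H.n i] (H.P i ⟨0, H.hn i⟩) :=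
  have hn : (H.last i).val + 1 = H.n i := Nat.sub_add_cancel (H.hn i)
  calc
    radSub (H.P i (H.last i)) = radSub^[(H.last i).val + 1] (H.P i ⟨0, H.hn i⟩) :=
      (Function.iterate_succ_apply' radSub _ _).symm
    _ = radSub^[H.n i] (H.P i ⟨0, H.hn i⟩) := congrArg (radSub^[·] (H.P i ⟨0, H.hn i⟩)) hn

section Artinian

variable [IsArtinian Rᵐᵒᵖ R]

theorem isLocalRing_end_P (j : Fin (H.n i)) : IsLocalRing (Module.End Rᵐᵒᵖ (H.P i j)) :=
  have : IsNoetherian Rᵐᵒᵖ R := isNoetherian_mulOpposite_self_of_isArtinian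
  (H.isIndecomposableMod_P j).isLocalRing_end

theorem radSub_P_lt (j : Fin (H.n i)) : radSub (H.P i j) < H.P i j :=
  have : IsNoetherian Rᵐᵒᵖ R := isNoetherian_mulOpposite_self_of_isArtinian
  radSub_lt _

theorem strictAnti_P (i : Fin H.m) : StrictAnti (H.P i) := fun j l hjl =>
  calc
    H.P i l ≤ radSub^[j.val + 1] (rightIdeal R (H.e i ⟨0, H.hn i⟩)) :=
      antitone_radSub_iterate _ (Nat.succ_le_of_lt hjl)
    _ = radSub (H.P i j) := Function.iterate_succ_apply' _ _ _
    _ < H.P i j := H.radSub_P_lt j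

theorem radSub_P_last_lt (j : Fin (H.n i)) : radSub (H.P i (H.last i)) < H.P i j :=
  (H.radSub_P_lt _).trans_le (H.antitone_P i (Nat.le_sub_one_of_lt j.isLt))

theorem le_radSub_P_last_or_eq_P {L : Submodule Rᵐᵒᵖ R} (hL : L ≤ H.P k ⟨0, H.hn k⟩) :
    L ≤ radSub (H.P k (H.last k)) ∨ ∃ s, L = H.P k s := by
  rw [radSub_P_last]
  refine (le_radSub_iterate_or_eq hL fun s hs hlt => ?_).imp_right
    fun ⟨s, hs, hLs⟩ => ⟨⟨s, hs⟩, hLs⟩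
  have := H.isLocalRing_end_P (⟨s, hs⟩ : Fin (H.n k))
  exact le_radSub_of_lt (N := H.P k ⟨s, hs⟩) hlt

variable {H} {j : Fin (H.n i)} {l : Fin (H.n k)}

theorem injective_or_range_le_radSub_P_last {g : H.P i j →ₗ[Rᵐᵒᵖ] R}
    (hg : LinearMap.range g ≤ H.P k ⟨0, H.hn k⟩) :
    Function.Injective g ∨ LinearMap.range g ≤ radSub (H.P k (H.last k)) := by
  refine (H.le_radSub_P_last_or_eq_P hg).symm.imp_left fun ⟨s, hs⟩ => ?_
  have : Module.Projective Rᵐᵒᵖ (LinearMap.range g) := hs ▸ H.projective_P s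
  have : Nontrivial (LinearMap.range g) := hs ▸ H.nontrivial_P s
  exact (H.isIndecomposableMod_P j).injective_of_projective_range g

theorem eq_of_injective {f : H.P i j →ₗ[Rᵐᵒᵖ] H.P k l} (hf : Function.Injective f) : i = k := by
  have := H.isLocalRing_end_P (⟨0, H.hn i⟩ : Fin (H.n i))
  obtain ⟨e⟩ := nonempty_linearEquiv_of_injective_of_injective
    (H.isIndecomposableMod_P (⟨0, H.hn k⟩ : Fin (H.n k)))
    (Submodule.inclusion_injective (H.P_le_P_zero j))
    (v := Submodule.inclusion (H.P_le_P_zero l) ∘ₗ f)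
    ((Submodule.inclusion_injective (H.P_le_P_zero l)).comp hf)
  by_contra hik
  exact (H.basic ⟨i, _⟩ ⟨k, _⟩ fun h => hik (congrArg Sigma.fst h)).false e

theorem not_injective_iff_range_le_radSub_P_last (f : H.P i j →ₗ[Rᵐᵒᵖ] H.P k l) :
    ¬ Function.Injective f ↔
      (LinearMap.range f).map (H.P k l).subtype ≤ radSub (H.P k (H.last k)) := by
  rw [← Function.Injective.of_comp_iff (H.P k l).injective_subtype f, ← LinearMap.coe_comp,
    ← LinearMap.range_comp]
  have hrange : LinearMap.range ((H.P k l).subtype ∘ₗ f) ≤ H.P k ⟨0, H.hn k⟩ :=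
    (range_subtype_comp_le f).trans (H.P_le_P_zero l)
  refine ⟨(injective_or_range_le_radSub_P_last hrange).resolve_left, fun hle hinj => ?_⟩
  obtain rfl : i = k := eq_of_injective (f := f) (.of_comp (f := (H.P k l).subtype) hinj)
  exact not_range_lt_of_injective hinj (hle.trans_lt (H.radSub_P_last_lt j))

theorem not_injective_of_lt {j l : Fin (H.n i)} (hjl : j < l) (f : H.P i j →ₗ[Rᵐᵒᵖ] H.P i l) :
    ¬ Function.Injective f := fun hf =>
  not_range_lt_of_injective (f := (H.P i l).subtype ∘ₗ f) ((H.P i l).injective_subtype.comp hf)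
    ((range_subtype_comp_le f).trans_lt (H.strictAnti_P i hjl))

end Artinian

end HaradaData

theorem statement4_general (R : Type) [Ring R] [IsArtinian Rᵐᵒᵖ R] (H : HaradaData R)
    (i k : Fin H.m) (j : Fin (H.n i)) (l : Fin (H.n k))
    (f : ↥(H.P i j) →ₗ[Rᵐᵒᵖ] ↥(H.P k l)) :
    (¬ Function.Injective f ↔
      Submodule.map (H.P k l).subtype (LinearMap.range f) ≤ radSub (H.P k (H.last k))) ∧
    ((i = k ∧ j.val < l.val) ∨ i ≠ k →
      Submodule.map (H.P k l).subtype (LinearMap.range f) ≤ radSub (H.P k (H.last k))) := by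
  have hiff := HaradaData.not_injective_iff_range_le_radSub_P_last f
  refine ⟨hiff, fun hcase => hiff.mp ?_⟩
  rcases hcase with ⟨rfl, hjl⟩ | hik
  · exact HaradaData.not_injective_of_lt hjl f
  · exact fun hf => hik (HaradaData.eq_of_injective hf)

/-- Lemma 2.2(2),(3),(4).  A homomorphism `f : P_{ij} → P_{kl}` is
non-injective iff its image is contained in `rad(P_{k n_k})`; in particular this happens
if `i = k` and `j < l`, or if `i ≠ k`. -/
theorem statement4 (K R : Type) [Field K] [IsAlgClosed K] [Ring R] [Algebra K R]
    [FiniteDimensional K R] (H : HaradaData R) (i k : Fin H.m)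
    (j : Fin (H.n i)) (l : Fin (H.n k))
    (f : ↥(H.P i j) →ₗ[Rᵐᵒᵖ] ↥(H.P k l)) :
    (¬ Function.Injective f ↔
      Submodule.map (H.P k l).subtype (LinearMap.range f) ≤ radSub (H.P k (H.last k))) ∧
    ((i = k ∧ j.val < l.val) ∨ i ≠ k →
      Submodule.map (H.P k l).subtype (LinearMap.range f) ≤ radSub (H.P k (H.last k))) := by
  have : IsArtinian Rᵐᵒᵖ R := isArtinian_of_tower K inferInstance
  exact statement4_general R H i k j l f
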